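/- Let q be a nonzero real number. There exists a C*-norm on U_q(2,-2): a norm N on the *-algebra U_q(2,-2) with N(xy) ≤ N(x)N(y) and N(x*x) = N(x)² for all x, y. -/

import Mathlib

/-- The five generators `z11, z12, z21, z22, τ` of the algebra `GL_q(2,-2)`. -/
inductive ZGen : Type
  | z11 | z12 | z21 | z22 | tau

def Zf (k : Type) [Field k] : ZGen → FreeAlgebra k ZGen := FreeAlgebra.ι k

/-- The defining relations of `GL_q(2,-2)`. -/
inductive GLq22Rel (k : Type) [Field k] (q : k) :
    FreeAlgebra k ZGen → FreeAlgebra k ZGen → Prop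
  | r1 : GLq22Rel k q (Zf k .z12 * Zf k .z11) (-(q • (Zf k .z11 * Zf k .z12)))
  | r2 : GLq22Rel k q (Zf k .z21 * Zf k .z11) (q • (Zf k .z11 * Zf k .z21))
  | r3 : GLq22Rel k q (Zf k .z22 * Zf k .z12) (q • (Zf k .z12 * Zf k .z22))
  | r4 : GLq22Rel k q (Zf k .z22 * Zf k .z21) (-(q • (Zf k .z21 * Zf k .z22)))
  | r5 : GLq22Rel k q (Zf k .z12 * Zf k .z21) (-(Zf k .z21 * Zf k .z12))
  | r6 : GLq22Rel k q (Zf k .z11 * Zf k .z22 + Zf k .z22 * Zf k .z11)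
      ((q - q⁻¹) • (Zf k .z12 * Zf k .z21))
  | r7 : GLq22Rel k q (Zf k .z11 * Zf k .tau) (-(Zf k .tau * Zf k .z11))
  | r8 : GLq22Rel k q (Zf k .z22 * Zf k .tau) (-(Zf k .tau * Zf k .z22))
  | r9 : GLq22Rel k q (Zf k .z12 * Zf k .tau) (-(Zf k .tau * Zf k .z12))
  | r10 : GLq22Rel k q (Zf k .z21 * Zf k .tau) (-(Zf k .tau * Zf k .z21))
  | r11 : GLq22Rel k q ((Zf k .z11 * Zf k .z22 + q⁻¹ • (Zf k .z12 * Zf k .z21)) * Zf k .tau) 1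

/-- The algebra `GL_q(2,-2)`. -/
abbrev GLq22 (k : Type) [Field k] (q : k) := RingQuot (GLq22Rel k q)

noncomputable section

/-- The generating matrix entries `z_{ij}` of `GL_q(2,-2)`. -/
def zM (k : Type) [Field k] (q : k) : Fin 2 → Fin 2 → GLq22 k q :=
  ![![RingQuot.mkAlgHom k (GLq22Rel k q) (Zf k .z11),
     RingQuot.mkAlgHom k (GLq22Rel k q) (Zf k .z12)],
    ![RingQuot.mkAlgHom k (GLq22Rel k q) (Zf k .z21),
     RingQuot.mkAlgHom k (GLq22Rel k q) (Zf k .z22)]]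

/-- The element `τ` of `GL_q(2,-2)`. -/
def tauE (k : Type) [Field k] (q : k) : GLq22 k q :=
  RingQuot.mkAlgHom k (GLq22Rel k q) (Zf k .tau)

/-!
Write `a = z₁₁`, `b = z₁₂` and `t = τ`. The `*`-structure makes `t` unitary and expresses the other
generators as `z₂₂ = a* t*` and `z₂₁ = q b* t*`, so `U_q(2,-2)` is the `*`-algebra generated by `a`,
`b` and a unitary `t` with `b a = -q a b`, `b* a = -q a b*`, `b` normal, `a a* + b b* = 1`,
`a* a + q² b b* = 1` and `t` anticommuting with `a` and `b`. Hence it is spanned by the monomials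
`bʲ (b*)ᵏ tˡ aⁱ`, where `aⁱ` means `(a*)⁻ⁱ` for `i < 0`.

The relations hold on `ℓ²(Y × ℤ³)` when `b` acts as multiplication by `y ∈ Y ⊆ [-1, 1]`, `a` as the
shift along `y ↦ -q⁻¹ y` with weight `√(1 - y²)` and `t` as a sign, each of them also shifting one
of the three gradings. If a combination of monomials acts as zero, so does its part of each degree
`(i, j - k, l)`, and this part acts through a polynomial in `y`, in which the monomial has exponent
`j + k`. Since `Y` can be chosen infinite, all coefficients vanish. The representation is therefore
faithful, and the operator norm pulls back to a C*-norm.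
-/

open Filter Polynomial
open scoped lp ENNReal

/-! ### Weighted shifts on `ℓ²` -/

section WeightedShift

variable {ι 𝕜 : Type*} [RCLike 𝕜] {σ ρ : ι → ι} {α β : ι → 𝕜}

theorem sum_norm_mul_comp_sq_le (hσ : Set.InjOn σ α.support) (hα : ∀ i, ‖α i‖ ≤ 1)
    (v : ℓ²(ι, 𝕜)) (s : Finset ι) :
    ∑ i ∈ s, ‖α i * v (σ i)‖ ^ (2 : ℝ≥0∞).toReal ≤ ‖v‖ ^ (2 : ℝ≥0∞).toReal := by
  classical
  have hσs : Set.InjOn σ (s.filter (α · ≠ 0) : Finset ι) :=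
    hσ.mono fun i hi ↦ (Finset.mem_filter (p := (α · ≠ 0)).mp hi).2
  calc
    _ = ∑ i ∈ s with α i ≠ 0, ‖α i * v (σ i)‖ ^ (2 : ℝ≥0∞).toReal := by
      refine (Finset.sum_filter_of_ne (p := (α · ≠ 0)) fun i _ hi hαi ↦ hi ?_).symm
      simp [hαi]
    _ ≤ ∑ i ∈ s with α i ≠ 0, ‖v (σ i)‖ ^ (2 : ℝ≥0∞).toReal := by
      gcongr with i
      rw [norm_mul]
      exact mul_le_of_le_one_left (norm_nonneg _) (hα i)
    _ = ∑ j ∈ (s.filter (α · ≠ 0)).image σ, ‖v j‖ ^ (2 : ℝ≥0∞).toReal := by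
      rw [Finset.sum_image hσs]
    _ ≤ ‖v‖ ^ (2 : ℝ≥0∞).toReal := lp.sum_rpow_le_norm_rpow (by norm_num) v _

/-- The weighted shift `v ↦ (i ↦ α i * v (σ i))` on `ℓ²`. It is a contraction when the weights are
bounded by `1` and `σ` is injective wherever they do not vanish. -/
def weightedShift (σ : ι → ι) (α : ι → 𝕜) (hσ : Set.InjOn σ α.support) (hα : ∀ i, ‖α i‖ ≤ 1) :
    ℓ²(ι, 𝕜) →L[𝕜] ℓ²(ι, 𝕜) :=
  LinearMap.mkContinuous
    { toFun v := ⟨fun i ↦ α i * v (σ i), memℓp_gen' (sum_norm_mul_comp_sq_le hσ hα v)⟩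
      map_add' v w := by ext i; exact mul_add _ _ _
      map_smul' c v := by ext i; exact mul_left_comm _ _ _ } 1 fun v ↦ by
    rw [one_mul]
    exact lp.norm_le_of_forall_sum_le (by norm_num) (norm_nonneg v)
      (sum_norm_mul_comp_sq_le hσ hα v)

@[simp]
theorem weightedShift_apply (hσ : Set.InjOn σ α.support) (hα : ∀ i, ‖α i‖ ≤ 1) (v : ℓ²(ι, 𝕜))
    (i : ι) : weightedShift σ α hσ hα v i = α i * v (σ i) :=
  rfl

theorem star_weightedShift (hσ : Set.InjOn σ α.support) (hα : ∀ i, ‖α i‖ ≤ 1)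
    (hρ : Set.InjOn ρ β.support) (hβ : ∀ i, ‖β i‖ ≤ 1)
    (hσρ : ∀ i, α i ≠ 0 → ρ (σ i) = i ∧ β (σ i) = star (α i))
    (hρσ : ∀ i, β i ≠ 0 → σ (ρ i) = i ∧ α (ρ i) = star (β i)) :
    star (weightedShift σ α hσ hα) = weightedShift ρ β hρ hβ := by
  rw [ContinuousLinearMap.star_eq_adjoint, eq_comm, ContinuousLinearMap.eq_adjoint_iff]
  intro v w
  simp only [lp.inner_eq_tsum, weightedShift_apply, RCLike.inner_apply]
  have supp_α : ∀ i ∈ Function.support fun i ↦ α i * w (σ i) * (starRingEnd 𝕜) (v i), α i ≠ 0 :=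
    fun i hi hαi ↦ hi (by simp [hαi])
  refine tsum_eq_tsum_of_ne_zero_bij (fun i ↦ σ i) (fun i j hij ↦ ?_) (fun i hi ↦ ?_) fun i ↦ ?_
  · exact Subtype.ext (hσ (supp_α _ i.2) (supp_α _ j.2) hij)
  · have hβi : β i ≠ 0 := fun hβi ↦ hi (by simp [hβi])
    obtain ⟨hi', hαi⟩ := hρσ i hβi
    refine ⟨⟨ρ i, ?_⟩, hi'⟩
    rw [Function.mem_support] at hi ⊢
    convert hi using 1
    simp only [hi', hαi, RCLike.star_def, map_mul]
    ring
  · obtain ⟨hi, hβi⟩ := hσρ i (supp_α _ i.2)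
    simp only [hi, hβi, RCLike.star_def, map_mul, RingHomCompTriple.comp_apply,
      RingHom.id_apply]
    ring

theorem star_weightedShift_equiv (σ : ι ≃ ι) (hα : ∀ i, ‖α i‖ ≤ 1) :
    star (weightedShift σ α σ.injective.injOn hα) =
      weightedShift σ.symm (fun i ↦ star (α (σ.symm i))) σ.symm.injective.injOn
        fun _ ↦ (norm_star _).trans_le (hα _) :=
  star_weightedShift _ _ _ _ (by simp) (by simp)

/-- The weighted shift along a permutation with weights of modulus `1`. -/
def unitaryShift (σ : ι ≃ ι) (α : ι → 𝕜) (hα : ∀ i, ‖α i‖ = 1) :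
    unitary (ℓ²(ι, 𝕜) →L[𝕜] ℓ²(ι, 𝕜)) :=
  ⟨weightedShift σ α σ.injective.injOn fun i ↦ (hα i).le, by
    rw [Unitary.mem_iff, star_weightedShift_equiv]
    constructor <;> ext v i <;> simp [← mul_assoc, RCLike.mul_conj, RCLike.conj_mul, hα]⟩

theorem unitaryShift_apply (σ : ι ≃ ι) (hα : ∀ i, ‖α i‖ = 1) (v : ℓ²(ι, 𝕜)) (i : ι) :
    (unitaryShift σ α hα : ℓ²(ι, 𝕜) →L[𝕜] ℓ²(ι, 𝕜)) v i = α i * v (σ i) :=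
  rfl

theorem star_unitaryShift_apply (σ : ι ≃ ι) (hα : ∀ i, ‖α i‖ = 1) (v : ℓ²(ι, 𝕜)) (i : ι) :
    star (unitaryShift σ α hα : ℓ²(ι, 𝕜) →L[𝕜] ℓ²(ι, 𝕜)) v i =
      star (α (σ.symm i)) * v (σ.symm i) := by
  rw [unitaryShift, star_weightedShift_equiv, weightedShift_apply]

end WeightedShift

/-! ### Commutation up to scalars and spanning sets -/

section QCommute

variable {R A : Type*} [CommSemiring R] [Semiring A] [Algebra R A] {x y z : A}

/-- Two elements `q`-commute when they commute up to an invertible scalar. -/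
def QCommute (R : Type*) {A : Type*} [CommSemiring R] [Semiring A] [Algebra R A] (x y : A) : Prop :=
  ∃ c : Rˣ, x * y = c • (y * x)

namespace QCommute

theorem of_commute (h : Commute x y) : QCommute R x y :=
  ⟨1, by rw [one_smul, h.eq]⟩

theorem of_eq_smul {K B : Type*} [Field K] [Semiring B] [Algebra K B] {x y : B} {c : K}
    (hc : c ≠ 0) (h : x * y = c • (y * x)) : QCommute K x y :=
  ⟨.mk0 c hc, h⟩

theorem symm (h : QCommute R x y) : QCommute R y x := by
  obtain ⟨c, hc⟩ := h
  exact ⟨c⁻¹, by rw [hc, inv_smul_smul]⟩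

theorem mul_right (hy : QCommute R x y) (hz : QCommute R x z) : QCommute R x (y * z) := by
  obtain ⟨c, hc⟩ := hy
  obtain ⟨d, hd⟩ := hz
  exact ⟨c * d, by rw [← mul_assoc, hc, smul_mul_assoc, mul_assoc, hd, mul_smul_comm, smul_smul,
    mul_assoc]⟩

theorem pow_right (h : QCommute R x y) (n : ℕ) : QCommute R x (y ^ n) := by
  induction n with
  | zero => exact of_commute (by simp)
  | succ n ih => exact pow_succ y n ▸ ih.mul_right h

theorem inv_right {u : Aˣ} (h : QCommute R x u) : QCommute R x ↑u⁻¹ := by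
  obtain ⟨c, hc⟩ := h.symm
  refine ⟨c, ?_⟩
  rw [Units.mul_inv_eq_iff_eq_mul, smul_mul_assoc, mul_assoc, ← mul_smul_comm, ← hc,
    Units.inv_mul_cancel_left]

theorem zpow_right {u : Aˣ} (h : QCommute R x u) (l : ℤ) : QCommute R x ↑(u ^ l) := by
  obtain ⟨n, rfl | rfl⟩ := l.eq_nat_or_neg
  · simpa using h.pow_right n
  · simpa [← inv_pow] using h.inv_right.pow_right n

theorem unitary_zpow_right [StarMul A] {u : unitary A} (h : QCommute R x u) (l : ℤ) :
    QCommute R x ↑(u ^ l) := by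
  simpa [← map_zpow] using zpow_right (u := Unitary.toUnits u) h l

protected theorem star [StarRing R] [StarRing A] [StarModule R A] (h : QCommute R x y) :
    QCommute R (star x) (star y) := by
  obtain ⟨c, hc⟩ := h.symm
  exact ⟨star c, by rw [← star_mul, hc, Units.smul_def, star_smul, star_mul]; rfl⟩

theorem star_left [StarRing R] [StarRing A] [StarModule R A] {u : unitary A}
    (h : QCommute R x (u : A)) : QCommute R (star x) (u : A) := by
  simpa [Unitary.star_eq_inv] using h.star.unitary_zpow_right (u := star u) (-1)

end QCommute

end QCommute

section StarZPow

variable {M : Type*} [Monoid M] [StarMul M]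

/-- `x ^ i` for `i ≥ 0` and `(star x) ^ (-i)` for `i < 0`. -/
def starZPow (x : M) (i : ℤ) : M :=
  x ^ i.toNat * star x ^ (-i).toNat

@[simp]
theorem starZPow_natCast (x : M) (n : ℕ) : starZPow x n = x ^ n := by
  simp [starZPow]

@[simp]
theorem starZPow_neg_natCast (x : M) (n : ℕ) : starZPow x (-n) = star x ^ n := by
  simp [starZPow]

theorem starZPow_star (x : M) (i : ℤ) : starZPow (star x) i = starZPow x (-i) := by
  obtain ⟨n, rfl | rfl⟩ := i.eq_nat_or_neg <;> simp

theorem map_starZPow {N F : Type*} [Monoid N] [StarMul N] [FunLike F M N] [MonoidHomClass F M N]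
    [StarHomClass F M N] (f : F) (x : M) (i : ℤ) : f (starZPow x i) = starZPow (f x) i := by
  simp [starZPow, map_star]

theorem self_mul_starZPow (x : M) (i : ℤ) :
    x * starZPow x i = starZPow x (i + 1) ∨
      x * starZPow x i = x * star x * starZPow x (i + 1) := by
  obtain n | n := i
  · left
    simpa [pow_succ'] using (starZPow_natCast x (n + 1)).symm
  · right
    rw [Int.negSucc_eq, show -((n : ℤ) + 1) + 1 = -n by ring, starZPow_neg_natCast, ← Nat.cast_succ,
      starZPow_neg_natCast, pow_succ', mul_assoc]

theorem star_mul_starZPow (x : M) (i : ℤ) :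
    star x * starZPow x i = starZPow x (i - 1) ∨
      star x * starZPow x i = star x * x * starZPow x (i - 1) := by
  simpa [starZPow_star, add_comm, sub_eq_add_neg] using self_mul_starZPow (star x) (-i)

end StarZPow

theorem span_eq_top_of_adjoin_eq_top {R A : Type*} [CommSemiring R] [Semiring A] [Algebra R A]
    {s M : Set A} (hs : Algebra.adjoin R s = ⊤) (one_mem : 1 ∈ Submodule.span R M)
    (mul_mem : ∀ g ∈ s, ∀ x ∈ M, g * x ∈ Submodule.span R M) : Submodule.span R M = ⊤ := by
  refine (Submodule.eq_top_iff').mpr fun y ↦ ?_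
  suffices ∀ x ∈ Submodule.span R M, y * x ∈ Submodule.span R M by simpa using this 1 one_mem
  induction hs ▸ Algebra.mem_top (R := R) (x := y) using Algebra.adjoin_induction with
  | mem g hg =>
    exact Submodule.span_le (p := (Submodule.span R M).comap (LinearMap.mulLeft R g)).mpr
      (mul_mem g hg)
  | algebraMap c =>
    exact fun x hx ↦ by simpa [Algebra.smul_def] using Submodule.smul_mem _ c hx
  | add y z _ _ hy hz =>
    exact fun x hx ↦ by simpa [add_mul] using Submodule.add_mem _ (hy x hx) (hz x hx)
  | mul y z _ _ hy hz => exact fun x hx ↦ by simpa [mul_assoc] using hy _ (hz x hx)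

theorem map_star_of_adjoin_eq_top {R A B : Type*} [CommSemiring R] [StarRing R] [Semiring A]
    [StarRing A] [Algebra R A] [StarModule R A] [Semiring B] [StarRing B] [Algebra R B]
    [StarModule R B] {s : Set A} (hs : StarAlgebra.adjoin R s = ⊤) (f : A →ₐ[R] B)
    (hf : ∀ x ∈ s, f (star x) = star (f x)) (x : A) : f (star x) = star (f x) := by
  induction hs ▸ StarSubalgebra.mem_top (R := R) (x := x) using StarAlgebra.adjoin_induction with
  | mem x hx => exact hf x hx
  | algebraMap c => simp [← algebraMap_star_comm]
  | add x y _ _ hx hy => simp [hx, hy]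
  | mul x y _ _ hx hy => simp [hx, hy]
  | star x _ hx => simp [hx]

/-! ### Ordered monomials -/

/-- The relations between `a = z₁₁`, `b = z₁₂` and the unitary `t = τ` in `U_q(2,-2)`. The remaining
generators are `z₂₂ = a* τ*` and `z₂₁ = q b* τ*`. -/
structure IsUTriple {A : Type*} [Ring A] [StarRing A] [Algebra ℂ A] (q : ℝ) (a b : A)
    (t : unitary A) : Prop where
  b_mul_a : b * a = -((q : ℂ) • (a * b))
  star_b_mul_a : star b * a = -((q : ℂ) • (a * star b))
  commute_star_b_b : Commute (star b) b
  a_mul_star_a : a * star a + b * star b = 1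
  star_a_mul_a : star a * a + (q : ℂ) ^ 2 • (b * star b) = 1
  a_mul_t : a * t = -(t * a)
  b_mul_t : b * t = -(t * b)

/-- The ordered monomials `bʲ (b*)ᵏ tˡ aⁱ`, indexed by `(j, k, l, i)`, where `aⁱ` is
`starZPow a i`. -/
def orderedMonomial {A : Type*} [Ring A] [StarRing A] (a b : A) (t : unitary A)
    (p : ℕ × ℕ × ℤ × ℤ) : A :=
  b ^ p.1 * star b ^ p.2.1 * ↑(t ^ p.2.2.1) * starZPow a p.2.2.2

section

variable {A : Type*} [Ring A] [StarRing A] {a b : A} {t : unitary A}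

theorem mul_orderedMonomial (j k : ℕ) (l i : ℤ) :
    b * orderedMonomial a b t (j, k, l, i) = orderedMonomial a b t (j + 1, k, l, i) := by
  simp only [orderedMonomial, ← mul_assoc, pow_succ']

theorem star_mul_orderedMonomial (hb : Commute (star b) b) (j k : ℕ) (l i : ℤ) :
    star b * orderedMonomial a b t (j, k, l, i) = orderedMonomial a b t (j, k + 1, l, i) := by
  simp only [orderedMonomial, ← mul_assoc, (hb.pow_right j).eq, pow_succ']

theorem zpow_mul_orderedMonomial_mem_span [Algebra ℂ A] [StarModule ℂ A]
    (hbt : QCommute ℂ b (t : A)) (m : ℤ) (p : ℕ × ℕ × ℤ × ℤ) :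
    ↑(t ^ m) * orderedMonomial a b t p ∈
      Submodule.span ℂ (Set.range (orderedMonomial a b t)) := by
  obtain ⟨j, k, l, i⟩ := p
  obtain ⟨c, hc⟩ := ((hbt.unitary_zpow_right m).symm.pow_right j).mul_right
    ((hbt.star_left.unitary_zpow_right m).symm.pow_right k)
  have : ↑(t ^ m) * orderedMonomial a b t (j, k, l, i) =
      c • orderedMonomial a b t (j, k, m + l, i) := by
    simp only [orderedMonomial, zpow_add, Submonoid.coe_mul, ← mul_assoc, hc, smul_mul_assoc]
  rw [this]
  exact Submodule.smul_mem _ c.1 (Submodule.subset_span ⟨_, rfl⟩)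

end

theorem map_orderedMonomial {A B : Type*} [Ring A] [StarRing A] [Algebra ℂ A] [Ring B] [StarRing B]
    [Algebra ℂ B] (f : A →⋆ₐ[ℂ] B) (a b : A) {t : unitary A} {s : unitary B} (ht : f t = s)
    (p : ℕ × ℕ × ℤ × ℤ) :
    f (orderedMonomial a b t p) = orderedMonomial (f a) (f b) s p := by
  obtain rfl : Unitary.map { (f : A →* B) with map_star' := map_star f } t = s := Subtype.ext ht
  rw [orderedMonomial, orderedMonomial, ← map_zpow, map_mul, map_mul, map_mul, map_pow, map_pow,
    map_star, map_starZPow]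
  rfl

namespace IsUTriple

variable {A : Type*} [Ring A] [StarRing A] [Algebra ℂ A] {q : ℝ} {a b : A} {t : unitary A}

theorem qCommute_a_b (h : IsUTriple q a b t) (hq : q ≠ 0) : QCommute ℂ a b :=
  .symm <| .of_eq_smul (c := -q) (by simpa using hq) (by simp [h.b_mul_a])

theorem qCommute_a_star_b (h : IsUTriple q a b t) (hq : q ≠ 0) : QCommute ℂ a (star b) :=
  .symm <| .of_eq_smul (c := -q) (by simpa using hq) (by simp [h.star_b_mul_a])

theorem qCommute_a_t (h : IsUTriple q a b t) : QCommute ℂ a (t : A) :=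
  .of_eq_smul (c := -1) (by simp) (by simp [h.a_mul_t])

theorem qCommute_b_t (h : IsUTriple q a b t) : QCommute ℂ b (t : A) :=
  .of_eq_smul (c := -1) (by simp) (by simp [h.b_mul_t])

variable [StarModule ℂ A]

theorem mul_mem_span_orderedMonomial (h : IsUTriple q a b t) {x : A} {e : ℤ} {z : ℂ}
    (hxb : QCommute ℂ x b) (hxb' : QCommute ℂ x (star b)) (hxt : QCommute ℂ x (t : A))
    (hx : ∀ i, x * starZPow a i = starZPow a (i + e) ∨
      x * starZPow a i = (1 - z • (b * star b)) * starZPow a (i + e))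
    (p : ℕ × ℕ × ℤ × ℤ) :
    x * orderedMonomial a b t p ∈ Submodule.span ℂ (Set.range (orderedMonomial a b t)) := by
  obtain ⟨j, k, l, i⟩ := p
  have mem (p) : orderedMonomial a b t p ∈ Submodule.span ℂ (Set.range (orderedMonomial a b t)) :=
    Submodule.subset_span ⟨p, rfl⟩
  set u : A := b ^ j * star b ^ k * ↑(t ^ l)
  have hu (i : ℤ) : orderedMonomial a b t (j, k, l, i) = u * starZPow a i := rfl
  obtain ⟨c, hc⟩ : QCommute ℂ x u :=
    ((hxb.pow_right j).mul_right (hxb'.pow_right k)).mul_right (hxt.unitary_zpow_right l)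
  have hb := h.commute_star_b_b
  have hb_pow : Commute (b * star b) (b ^ j * star b ^ k) :=
    (((Commute.refl b).mul_left hb).pow_right j).mul_right
      ((hb.symm.mul_left (Commute.refl _)).pow_right k)
  have hb_zpow : QCommute ℂ (b * star b) ↑(t ^ l) :=
    (h.qCommute_b_t.symm.mul_right h.qCommute_b_t.star_left.symm).symm.unitary_zpow_right l
  obtain ⟨d, hd⟩ : QCommute ℂ u (b * star b) :=
    ((QCommute.of_commute hb_pow).mul_right hb_zpow).symm
  rw [hu, ← mul_assoc, hc, smul_mul_assoc, mul_assoc]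
  refine Submodule.smul_mem _ c.1 ?_
  rcases hx i with hi | hi
  · exact hi ▸ mem (j, k, l, i + e)
  have expand : u * (x * starZPow a i) = orderedMonomial a b t (j, k, l, i + e) -
      z • d • orderedMonomial a b t (j + 1, k + 1, l, i + e) := by
    rw [← mul_orderedMonomial, ← star_mul_orderedMonomial hb, hu, hi, ← mul_assoc, mul_sub, mul_one,
      sub_mul, mul_smul_comm, hd]
    simp only [smul_mul_assoc, mul_assoc]
  rw [expand]
  exact Submodule.sub_mem _ (mem _) (Submodule.smul_mem _ z (Submodule.smul_mem _ d.1 (mem _)))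

theorem span_orderedMonomial (h : IsUTriple q a b t) (hq : q ≠ 0)
    (hgen : StarAlgebra.adjoin ℂ {a, b, (t : A)} = ⊤) :
    Submodule.span ℂ (Set.range (orderedMonomial a b t)) = ⊤ := by
  have hgen' : Algebra.adjoin ℂ ({a, b, (t : A)} ∪ star {a, b, (t : A)}) = ⊤ := by
    rw [← StarAlgebra.adjoin_toSubalgebra, hgen, StarSubalgebra.top_toSubalgebra]
  refine span_eq_top_of_adjoin_eq_top hgen'
    (Submodule.subset_span ⟨(0, 0, 0, 0), by simp [orderedMonomial, starZPow]⟩) fun g hg ↦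
    Set.forall_mem_range.mpr ?_
  rcases hg with (rfl | rfl | rfl) | hg
  · refine h.mul_mem_span_orderedMonomial (e := 1) (z := 1) (h.qCommute_a_b hq)
      (h.qCommute_a_star_b hq) h.qCommute_a_t fun i ↦ ?_
    rw [one_smul, ← eq_sub_of_add_eq h.a_mul_star_a]
    exact self_mul_starZPow _ i
  · exact fun p ↦ Submodule.subset_span ⟨_, (mul_orderedMonomial ..).symm⟩
  · simpa using zpow_mul_orderedMonomial_mem_span h.qCommute_b_t 1
  obtain ⟨g, rfl⟩ := star_involutive.surjective g
  rcases Set.star_mem_star.mp hg with rfl | rfl | rfl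
  · refine h.mul_mem_span_orderedMonomial (e := -1) (z := (q : ℂ) ^ 2)
      (by simpa using (h.qCommute_a_star_b hq).star) (h.qCommute_a_b hq).star
      h.qCommute_a_t.star_left fun i ↦ ?_
    rw [← eq_sub_of_add_eq h.star_a_mul_a]
    exact star_mul_starZPow _ i
  · exact fun p ↦ Submodule.subset_span
      ⟨_, (star_mul_orderedMonomial h.commute_star_b_b ..).symm⟩
  · simpa [← Unitary.star_eq_inv] using zpow_mul_orderedMonomial_mem_span h.qCommute_b_t (-1)

end IsUTriple

/-! ### Generators and relations -/

/-- A family of elements of an algebra satisfying the defining relations of `GL_q(2,-2)`. -/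
structure IsGLqFamily {k A : Type*} [Field k] [Ring A] [Algebra k A] (q : k) (z : ZGen → A) :
    Prop where
  z12_mul_z11 : z .z12 * z .z11 = -(q • (z .z11 * z .z12))
  z21_mul_z11 : z .z21 * z .z11 = q • (z .z11 * z .z21)
  z22_mul_z12 : z .z22 * z .z12 = q • (z .z12 * z .z22)
  z22_mul_z21 : z .z22 * z .z21 = -(q • (z .z21 * z .z22))
  z12_mul_z21 : z .z12 * z .z21 = -(z .z21 * z .z12)
  z11_mul_z22_add : z .z11 * z .z22 + z .z22 * z .z11 = (q - q⁻¹) • (z .z12 * z .z21)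
  z11_mul_tau : z .z11 * z .tau = -(z .tau * z .z11)
  z22_mul_tau : z .z22 * z .tau = -(z .tau * z .z22)
  z12_mul_tau : z .z12 * z .tau = -(z .tau * z .z12)
  z21_mul_tau : z .z21 * z .tau = -(z .tau * z .z21)
  det_mul_tau : (z .z11 * z .z22 + q⁻¹ • (z .z12 * z .z21)) * z .tau = 1

namespace GLq22

variable (k : Type) [Field k] (q : k)

/-- The generators of `GL_q(2,-2)` as one family; its values are the entries of `zM` and `tauE`,
definitionally. -/
def gen (z : ZGen) : GLq22 k q :=
  RingQuot.mkAlgHom k (GLq22Rel k q) (Zf k z)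

theorem adjoin_range_gen : Algebra.adjoin k (Set.range (gen k q)) = ⊤ := by
  have : Set.range (gen k q) =
      RingQuot.mkAlgHom k (GLq22Rel k q) '' Set.range (FreeAlgebra.ι k) :=
    Set.range_comp (RingQuot.mkAlgHom k (GLq22Rel k q)) (FreeAlgebra.ι k)
  rw [this, ← AlgHom.map_adjoin, FreeAlgebra.adjoin_range_ι, Algebra.map_top,
    AlgHom.range_eq_top]
  exact RingQuot.mkAlgHom_surjective k _

theorem isGLqFamily_gen : IsGLqFamily q (gen k q) where
  z12_mul_z11 := by simpa [gen] using RingQuot.mkAlgHom_rel k (GLq22Rel.r1 (q := q))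
  z21_mul_z11 := by simpa [gen] using RingQuot.mkAlgHom_rel k (GLq22Rel.r2 (q := q))
  z22_mul_z12 := by simpa [gen] using RingQuot.mkAlgHom_rel k (GLq22Rel.r3 (q := q))
  z22_mul_z21 := by simpa [gen] using RingQuot.mkAlgHom_rel k (GLq22Rel.r4 (q := q))
  z12_mul_z21 := by simpa [gen] using RingQuot.mkAlgHom_rel k (GLq22Rel.r5 (q := q))
  z11_mul_z22_add := by simpa [gen] using RingQuot.mkAlgHom_rel k (GLq22Rel.r6 (q := q))
  z11_mul_tau := by simpa [gen] using RingQuot.mkAlgHom_rel k (GLq22Rel.r7 (q := q))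
  z22_mul_tau := by simpa [gen] using RingQuot.mkAlgHom_rel k (GLq22Rel.r8 (q := q))
  z12_mul_tau := by simpa [gen] using RingQuot.mkAlgHom_rel k (GLq22Rel.r9 (q := q))
  z21_mul_tau := by simpa [gen] using RingQuot.mkAlgHom_rel k (GLq22Rel.r10 (q := q))
  det_mul_tau := by simpa [gen] using RingQuot.mkAlgHom_rel k (GLq22Rel.r11 (q := q))

variable {k q} {A : Type*} [Ring A] [Algebra k A] {z : ZGen → A}

theorem exists_algHom (hz : IsGLqFamily q z) :
    ∃ f : GLq22 k q →ₐ[k] A, ∀ i, f (gen k q i) = z i := by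
  refine ⟨RingQuot.liftAlgHom k ⟨FreeAlgebra.lift k z, ?_⟩, fun i ↦ ?_⟩
  · rintro _ _ (_ | _)
    all_goals simp only [Zf, map_mul, map_add, map_neg, map_smul, map_one, FreeAlgebra.lift_ι_apply]
    exacts [hz.z12_mul_z11, hz.z21_mul_z11, hz.z22_mul_z12, hz.z22_mul_z21, hz.z12_mul_z21,
      hz.z11_mul_z22_add, hz.z11_mul_tau, hz.z22_mul_tau, hz.z12_mul_tau, hz.z21_mul_tau,
      hz.det_mul_tau]
  · rw [gen, RingQuot.liftAlgHom_mkAlgHom_apply, Zf, FreeAlgebra.lift_ι_apply]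

end GLq22

section Anticommute

variable {A : Type*} [Ring A] [StarRing A] {t : unitary A} {x : A}

theorem mul_star_unitary_mul (hx : x * t = -(t * x)) (y : A) :
    y * star (t : A) * x = -(y * x * star (t : A)) := by
  calc
    y * star (t : A) * x = y * star (t : A) * (x * t) * star (t : A) := by
      rw [mul_assoc _ (x * _), mul_assoc x, Unitary.mul_star_self_of_mem t.2, mul_one]
    _ = -(y * x * star (t : A)) := by
      rw [hx, mul_neg, neg_mul, ← mul_assoc, mul_assoc y, Unitary.star_mul_self_of_mem t.2, mul_one]

theorem star_mul_unitary (hx : x * t = -(t * x)) : star x * t = -(t * star x) := by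
  simpa [← mul_assoc, mul_assoc _ (star (t : A))] using
    congrArg (fun y ↦ (t : A) * star y * t) hx

end Anticommute

namespace IsUTriple

variable {A : Type*} [Ring A] [StarRing A] [Algebra ℂ A] {q : ℝ} {a b : A} {t : unitary A}

/-- The family `z₁₁, z₁₂, z₂₁, z₂₂, τ` determined by `a = z₁₁`, `b = z₁₂` and `t = τ`. -/
def family (q : ℝ) (a b : A) (t : unitary A) : ZGen → A
  | .z11 => a
  | .z12 => b
  | .z21 => (q : ℂ) • (star b * star (t : A))
  | .z22 => star a * star (t : A)
  | .tau => t

theorem eq_family {z : ZGen → A} (hq : q ≠ 0) (h11 : star (z .z11) = z .z22 * z .tau)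
    (h12 : star (z .z12) = (q : ℂ)⁻¹ • (z .z21 * z .tau)) (hτ : z .tau ∈ unitary A) :
    z = family q (z .z11) (z .z12) ⟨z .tau, hτ⟩ := by
  have hq' : (q : ℂ) ≠ 0 := by exact_mod_cast hq
  ext (_ | _ | _ | _ | _)
  any_goals rfl
  · rw [family, h12, smul_mul_assoc, smul_inv_smul₀ hq', mul_assoc,
      Unitary.mul_star_self_of_mem hτ, mul_one]
  · rw [family, h11, mul_assoc, Unitary.mul_star_self_of_mem hτ, mul_one]

variable [StarModule ℂ A]

theorem adjoin_eq_top (hgen : Algebra.adjoin ℂ (Set.range (family q a b t)) = ⊤) :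
    StarAlgebra.adjoin ℂ {a, b, (t : A)} = ⊤ := by
  set S := StarAlgebra.adjoin ℂ {a, b, (t : A)}
  have ha : a ∈ S := StarAlgebra.subset_adjoin _ _ (by simp)
  have hb : b ∈ S := StarAlgebra.subset_adjoin _ _ (by simp)
  have ht : (t : A) ∈ S := StarAlgebra.subset_adjoin _ _ (by simp)
  have family_mem : ∀ i, family q a b t i ∈ S := by
    rintro (_ | _)
    exacts [ha, hb, S.smul_mem (mul_mem (star_mem hb) (star_mem ht)) _,
      mul_mem (star_mem ha) (star_mem ht), ht]
  rw [← StarSubalgebra.toSubalgebra_inj, StarSubalgebra.top_toSubalgebra, ← top_le_iff, ← hgen]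
  exact Algebra.adjoin_le (Set.range_subset_iff.mpr family_mem)

theorem star_a_mul_star_b (h : IsUTriple q a b t) :
    star a * star b = -((q : ℂ) • (star b * star a)) := by
  simpa using congrArg star h.b_mul_a

theorem star_a_mul_b (h : IsUTriple q a b t) : star a * b = -((q : ℂ) • (b * star a)) := by
  simpa using congrArg star h.star_b_mul_a

theorem isGLqFamily (h : IsUTriple q a b t) (hq : q ≠ 0) :
    IsGLqFamily (q : ℂ) (family q a b t) := by
  have hq' : (q : ℂ) ≠ 0 := by exact_mod_cast hq
  have ht : star (t : A) * t = 1 := Unitary.star_mul_self_of_mem t.2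
  have ht' : t * star (t : A) = 1 := Unitary.mul_star_self_of_mem t.2
  have a_star_t := star_mul_unitary h.a_mul_t
  have b_star_t := star_mul_unitary h.b_mul_t
  constructor <;> simp only [family, smul_mul_assoc, mul_smul_comm, ← mul_assoc,
    mul_star_unitary_mul h.a_mul_t, mul_star_unitary_mul h.b_mul_t, mul_star_unitary_mul a_star_t,
    mul_star_unitary_mul b_star_t]
  · exact h.b_mul_a
  · simp only [h.star_b_mul_a, neg_mul, neg_neg, smul_mul_assoc]
  · simp only [h.star_a_mul_b, neg_mul, neg_neg, smul_mul_assoc]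
  · simp only [h.star_a_mul_star_b, neg_mul, smul_neg, neg_neg, smul_mul_assoc]
  · rw [h.commute_star_b_b.eq, smul_neg, neg_neg]
  · rw [← sub_eq_add_neg, ← sub_mul, eq_sub_of_add_eq h.a_mul_star_a,
      eq_sub_of_add_eq h.star_a_mul_a, ← smul_mul_assoc, smul_smul]
    have : (q - (q : ℂ)⁻¹) * q = q ^ 2 - 1 := by field_simp
    rw [this, sub_smul, one_smul]
    simp only [sub_mul, smul_mul_assoc]
    abel
  · exact h.a_mul_t
  · rw [mul_assoc, ht, ← neg_mul, ← a_star_t, mul_assoc, ht']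
  · exact h.b_mul_t
  · rw [mul_assoc, ht, ← smul_neg, ← neg_mul, ← b_star_t, mul_assoc, ht']
  · rw [smul_smul, inv_mul_cancel₀ hq', one_smul, ← add_mul, h.a_mul_star_a, one_mul, ht]

end IsUTriple

namespace IsGLqFamily

section Field

variable {k A : Type*} [Field k] [Ring A] [Algebra k A] {q : k} {z : ZGen → A}

theorem tau_mul_det (hz : IsGLqFamily q z) :
    z .tau * (z .z11 * z .z22 + q⁻¹ • (z .z12 * z .z21)) = 1 := by
  have commute {x y : A} (hx : x * z .tau = -(z .tau * x)) (hy : y * z .tau = -(z .tau * y)) :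
      Commute (x * y) (z .tau) := by
    rw [Commute, SemiconjBy, mul_assoc, hy, mul_neg, ← mul_assoc, hx, neg_mul, neg_neg, mul_assoc]
  have h := (commute hz.z11_mul_tau hz.z22_mul_tau).add_left
    ((commute hz.z12_mul_tau hz.z21_mul_tau).smul_left q⁻¹)
  rw [← h.eq, hz.det_mul_tau]

end Field

variable {A : Type*} [Ring A] [StarRing A] [Algebra ℂ A] {q : ℝ} {z : ZGen → A}

theorem tau_mem_unitary (hz : IsGLqFamily (q : ℂ) z)
    (hτ : star (z .tau) = z .z11 * z .z22 + (q : ℂ)⁻¹ • (z .z12 * z .z21)) :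
    z .tau ∈ unitary A := by
  rw [Unitary.mem_iff, hτ]
  exact ⟨hz.det_mul_tau, hz.tau_mul_det⟩

theorem isUTriple (hz : IsGLqFamily (q : ℂ) z) (hq : q ≠ 0) (h11 : star (z .z11) = z .z22 * z .tau)
    (h12 : star (z .z12) = (q : ℂ)⁻¹ • (z .z21 * z .tau)) (hτ : z .tau ∈ unitary A) :
    IsUTriple q (z .z11) (z .z12) ⟨z .tau, hτ⟩ := by
  have hq' : (q : ℂ) ≠ 0 := by exact_mod_cast hq
  have star_b_mul {x : A} (hx : x * z .tau = -(z .tau * x)) :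
      star (z .z12) * x = -((q : ℂ)⁻¹ • (z .z21 * x * z .tau)) := by
    rw [h12, smul_mul_assoc, mul_assoc, mul_assoc, hx, mul_neg, smul_neg, neg_neg]
  have det : z .z11 * z .z22 * z .tau + (q : ℂ)⁻¹ • (z .z12 * z .z21 * z .tau) = 1 := by
    rw [← smul_mul_assoc, ← add_mul, hz.det_mul_tau]
  refine ⟨hz.z12_mul_z11, ?_, ?_, ?_, ?_, hz.z11_mul_tau, hz.z12_mul_tau⟩
  · rw [star_b_mul hz.z11_mul_tau, hz.z21_mul_z11, h12, smul_mul_assoc, mul_smul_comm, smul_comm,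
      mul_assoc]
  · rw [Commute, SemiconjBy, star_b_mul hz.z12_mul_tau, h12, mul_smul_comm, ← mul_assoc,
      hz.z12_mul_z21, neg_mul, smul_neg]
  · rw [h11, h12, mul_smul_comm, ← mul_assoc, ← mul_assoc, det]
  · calc
      star (z .z11) * z .z11 + (q : ℂ) ^ 2 • (z .z12 * star (z .z12)) =
          -(z .z22 * z .z11 * z .tau) + (q : ℂ) • (z .z12 * z .z21 * z .tau) := by
        rw [h11, h12, mul_assoc, mul_assoc, hz.z11_mul_tau, mul_neg, neg_neg, mul_smul_comm,
          smul_smul, mul_assoc (z .z12), pow_two, mul_inv_cancel_right₀ hq']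
      _ = 1 := by
        rw [eq_sub_of_add_eq' hz.z11_mul_z22_add, ← det, sub_mul, smul_mul_assoc, sub_smul]
        abel

end IsGLqFamily

namespace GLq22

variable {q : ℝ} [StarRing (GLq22 ℂ (q : ℂ))] [StarModule ℂ (GLq22 ℂ (q : ℂ))]
  {a b : GLq22 ℂ (q : ℂ)} {t : unitary (GLq22 ℂ (q : ℂ))}
  {B : Type*} [Ring B] [StarRing B] [Algebra ℂ B] [StarModule ℂ B] {a' b' : B} {t' : unitary B}

theorem exists_starAlgHom (hq : q ≠ 0) (hgen : gen ℂ (q : ℂ) = IsUTriple.family q a b t)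
    (h' : IsUTriple q a' b' t') :
    ∃ f : GLq22 ℂ (q : ℂ) →⋆ₐ[ℂ] B, f a = a' ∧ f b = b' ∧ f t = t' := by
  have hq' : (q : ℂ) ≠ 0 := by exact_mod_cast hq
  obtain ⟨f, hf⟩ := exists_algHom (h'.isGLqFamily hq)
  rw [hgen] at hf
  have ha : f a = a' := hf .z11
  have hb : f b = b' := hf .z12
  have ht : f t = t' := hf .tau
  have ht_star : f (star ↑t) = star ↑t' := by
    refine left_inv_eq_right_inv (a := (t' : B)) ?_ (Unitary.mul_star_self_of_mem t'.2)
    rw [← ht, ← map_mul, Unitary.star_mul_self_of_mem t.2, map_one]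
  have cancel {x : GLq22 ℂ (q : ℂ)} {y : B} (hx : f (x * star ↑t) = y * star ↑t') : f x = y := by
    have := congrArg (· * (t' : B)) hx
    simpa only [map_mul, ht_star, mul_assoc, Unitary.star_mul_self_of_mem t'.2, mul_one] using this
  have map_star_f : ∀ x, f (star x) = star (f x) := by
    refine map_star_of_adjoin_eq_top
      (IsUTriple.adjoin_eq_top (hgen ▸ adjoin_range_gen ℂ (q : ℂ))) f ?_
    rintro _ (rfl | rfl | rfl)
    · exact (cancel (hf .z22)).trans (congrArg star ha.symm)
    · refine (cancel (smul_right_injective B hq' ?_)).trans (congrArg star hb.symm)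
      exact (map_smul f _ _).symm.trans (hf .z21)
    · rw [ht_star, ht]
  exact ⟨{ f with map_star' := map_star_f }, ha, hb, ht⟩

theorem exists_injective_starAlgHom (hq : q ≠ 0) (h : IsUTriple q a b t)
    (hgen : gen ℂ (q : ℂ) = IsUTriple.family q a b t) (h' : IsUTriple q a' b' t')
    (hind : LinearIndependent ℂ (orderedMonomial a' b' t')) :
    ∃ f : GLq22 ℂ (q : ℂ) →⋆ₐ[ℂ] B, Function.Injective f := by
  obtain ⟨f, ha, hb, ht⟩ := exists_starAlgHom hq hgen h'
  have map_monomial : f.toAlgHom.toLinearMap ∘ orderedMonomial a b t = orderedMonomial a' b' t' :=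
    funext fun p ↦ by
      rw [← ha, ← hb, ← map_orderedMonomial f a b ht]
      rfl
  exact ⟨f, LinearMap.injective_of_linearIndependent (f := f.toAlgHom.toLinearMap)
    (h.span_orderedMonomial hq (IsUTriple.adjoin_eq_top (hgen ▸ adjoin_range_gen ℂ (q : ℂ))))
    (map_monomial ▸ hind)⟩

end GLq22

/-! ### Shifts of graded `ℓ²`-spaces -/

section SpectralShift

open Classical in
/-- Multiplication by `r` on `Y`, with the junk value `y` when `r * y ∉ Y`. -/
def scale {Y : Set ℝ} (r : ℝ) (y : Y) : Y :=
  if h : r * y ∈ Y then ⟨r * y, h⟩ else y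

variable {Y : Set ℝ} {f g : ℝ → ℝ} {r s : ℝ} {D : Type*} [AddCommGroup D] {e : D}

theorem coe_scale {y : Y} (h : r * y ∈ Y) : (scale r y : ℝ) = r * y := by
  rw [scale, dif_pos h]

theorem scale_one (y : Y) : scale 1 y = y := by
  simp [scale]

theorem scale_scale (hsr : s * r = 1) {y : Y} (h : r * y ∈ Y) : scale s (scale r y) = y := by
  ext
  rw [coe_scale] <;> simp [coe_scale h, ← mul_assoc, hsr]

theorem tendsto_scale (hr : r ≠ 0) : Tendsto (scale (Y := Y) r) cofinite cofinite := by
  refine Tendsto.cofinite_of_finite_preimage_singleton fun p ↦ ?_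
  refine ((Set.finite_singleton p).union ((Set.finite_singleton (r⁻¹ * (p : ℝ))).preimage
    Subtype.val_injective.injOn)).subset fun y hy ↦ ?_
  by_cases h : r * y ∈ Y
  · right
    simp [← Set.mem_singleton_iff.mp hy, coe_scale h, hr]
  · left
    simpa [scale, h] using hy

/-- The condition under which `f` and `r` define a contraction `spectralShift`. -/
structure IsShiftWeight (Y : Set ℝ) (f : ℝ → ℝ) (r : ℝ) : Prop where
  ne_zero : r ≠ 0
  abs_le_one : ∀ y ∈ Y, |f y| ≤ 1
  mul_mem : ∀ y ∈ Y, f y ≠ 0 → r * y ∈ Y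

/-- The operator `(v_{y,d}) ↦ (f(y) v_{ry,d-e})` on `ℓ²(Y × D)`. -/
def spectralShift (h : IsShiftWeight Y f r) (e : D) :
    ℓ²(Y × D, ℂ) →L[ℂ] ℓ²(Y × D, ℂ) :=
  weightedShift (fun i ↦ (scale r i.1, i.2 - e)) (fun i ↦ (f i.1 : ℂ))
    (Set.LeftInvOn.injOn (f₁' := fun i ↦ (scale r⁻¹ i.1, i.2 + e)) fun i hi ↦ by
      have hmem := h.mul_mem _ i.1.2 (Complex.ofReal_ne_zero.mp hi)
      simp [scale_scale (inv_mul_cancel₀ h.ne_zero) hmem])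
    fun i ↦ by simpa using h.abs_le_one _ i.1.2

theorem spectralShift_apply (h : IsShiftWeight Y f r) (v : ℓ²(Y × D, ℂ)) (y : Y) (d : D) :
    spectralShift h e v (y, d) = f y * v (scale r y, d - e) :=
  rfl

theorem star_spectralShift (h : IsShiftWeight Y f r) (h' : IsShiftWeight Y g s) (hsr : s * r = 1)
    (hfg : ∀ y, g (r * y) = f y) : star (spectralShift h e) = spectralShift h' (-e) := by
  have hrs : r * s = 1 := mul_comm r s ▸ hsr
  have hgf (y : ℝ) : f (s * y) = g y := by rw [← hfg, ← mul_assoc, hrs, one_mul]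
  refine star_weightedShift _ _ _ _ (fun i hi ↦ ?_) fun i hi ↦ ?_
  · have hmem := h.mul_mem _ i.1.2 (Complex.ofReal_ne_zero.mp hi)
    simp [scale_scale hsr hmem, coe_scale hmem, hfg]
  · have hmem := h'.mul_mem _ i.1.2 (Complex.ofReal_ne_zero.mp hi)
    simp [scale_scale hrs hmem, coe_scale hmem, hgf]

theorem spectralShift_spectralShift_neg_apply (h : IsShiftWeight Y f r) (h' : IsShiftWeight Y g s)
    (hsr : s * r = 1) (hfg : ∀ y, g (r * y) = f y) (v : ℓ²(Y × D, ℂ)) (y : Y) (d : D) :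
    spectralShift h e (spectralShift h' (-e) v) (y, d) = (f y : ℂ) ^ 2 * v (y, d) := by
  rw [spectralShift_apply, spectralShift_apply, sub_neg_eq_add, sub_add_cancel, ← mul_assoc]
  by_cases hy : f y = 0
  · simp [hy]
  have hmem := h.mul_mem y y.2 hy
  rw [scale_scale hsr hmem, coe_scale hmem, hfg, sq]

theorem pow_apply_of_apply_eq {X : ℓ²(Y × D, ℂ) →L[ℂ] ℓ²(Y × D, ℂ)} {F : Y → D → ℂ}
    (hF : ∀ y d, F y (d - e) = F y d) (hX : ∀ v y d, X v (y, d) = F y d * v (y, d - e)) (n : ℕ)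
    (v : ℓ²(Y × D, ℂ)) (y : Y) (d : D) : (X ^ n) v (y, d) = F y d ^ n * v (y, d - n • e) := by
  induction n generalizing d with
  | zero => simp
  | succ n ih =>
    rw [pow_succ', mul_apply_eq_comp, hX, ih, hF, ← mul_assoc, pow_succ', sub_sub, succ_nsmul']

/-- `X` shifts the `D`-grading of `ℓ²(Y × D)` by `e`, composing with a finite-to-one map of `Y` and
multiplying by a weight that vanishes at only finitely many points of `Y`. -/
def IsGenericShift (X : ℓ²(Y × D, ℂ) →L[ℂ] ℓ²(Y × D, ℂ)) (e : D) : Prop :=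
  ∃ (F : Y → ℂ) (G : Y → Y), (∀ᶠ y in cofinite, F y ≠ 0) ∧ Tendsto G cofinite cofinite ∧
    ∀ v y d, X v (y, d) = F y * v (G y, d - e)

theorem isGenericShift_spectralShift (h : IsShiftWeight Y f r)
    (hf : ∀ᶠ y : Y in cofinite, f y ≠ 0) : IsGenericShift (spectralShift h e) e :=
  ⟨fun y ↦ f y, scale r, by simpa using hf, tendsto_scale h.ne_zero, spectralShift_apply h⟩

namespace IsGenericShift

variable {X X' : ℓ²(Y × D, ℂ) →L[ℂ] ℓ²(Y × D, ℂ)} {e' : D}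

protected theorem one : IsGenericShift (1 : ℓ²(Y × D, ℂ) →L[ℂ] ℓ²(Y × D, ℂ)) 0 :=
  ⟨1, id, by simp, tendsto_id, by simp⟩

protected theorem mul (h : IsGenericShift X e) (h' : IsGenericShift X' e') :
    IsGenericShift (X * X') (e + e') := by
  obtain ⟨F, G, hF, hG, hX⟩ := h
  obtain ⟨F', G', hF', hG', hX'⟩ := h'
  refine ⟨fun y ↦ F y * F' (G y), G' ∘ G, ?_, hG'.comp hG, fun v y d ↦ ?_⟩
  · filter_upwards [hF, hG.eventually hF'] with y hy hy' using mul_ne_zero hy hy'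
  · rw [mul_apply_eq_comp, hX, hX', mul_assoc, sub_sub, Function.comp_apply]

protected theorem pow (h : IsGenericShift X e) (n : ℕ) : IsGenericShift (X ^ n) (n • e) := by
  induction n with
  | zero => simpa using IsGenericShift.one
  | succ n ih => simpa only [pow_succ, succ_nsmul] using ih.mul h

protected theorem starZPow (h : IsGenericShift X e) (h' : IsGenericShift (star X) (-e)) (i : ℤ) :
    IsGenericShift (starZPow X i) (i • e) := by
  obtain ⟨n, rfl | rfl⟩ := i.eq_nat_or_neg
  · simpa using h.pow n
  · simpa using h'.pow n

end IsGenericShift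

theorem sum_mul_pow_eq_zero {ι : Type*} {s : Finset ι} {n : ι → ℕ} {c : ι → ℂ}
    (hn : Set.InjOn n s) (h : ∃ᶠ y : Y in cofinite, ∑ i ∈ s, c i * (y : ℂ) ^ n i = 0) :
    ∀ i ∈ s, c i = 0 := by
  set P : ℂ[X] := ∑ i ∈ s, C (c i) * X ^ n i with hP
  have hroots : {x : ℂ | P.IsRoot x}.Infinite := by
    rw [frequently_cofinite_iff_infinite] at h
    refine (h.image (Complex.ofReal_injective.comp Subtype.val_injective).injOn).mono ?_
    rintro _ ⟨y, hy, rfl⟩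
    simpa [hP, IsRoot, eval_finsetSum] using hy
  intro i hi
  have hcoeff : P.coeff (n i) = c i := by
    rw [hP, finsetSum_coeff, Finset.sum_eq_single_of_mem i hi]
    · simp
    · intro j hj hji
      simp [coeff_X_pow, (hn.ne hj hi hji).symm]
  rw [← hcoeff, eq_zero_of_infinite_isRoot P hroots, coeff_zero]

theorem linearIndependent_of_apply_eq (hY : Y.Infinite) {ι : Type*} {n : ι → ℕ} {w : ι → D}
    (hnw : Function.Injective fun i ↦ (n i, w i)) {c : ι → D → ℂ} (hc : ∀ i d, c i d ≠ 0)
    {F : D → Y → ℂ} (hF : ∀ d, ∀ᶠ y in cofinite, F d y ≠ 0) {G : D → Y → Y}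
    {M : ι → ℓ²(Y × D, ℂ) →L[ℂ] ℓ²(Y × D, ℂ)}
    (hM : ∀ i v y d,
      M i v (y, d) = c i d * (y : ℂ) ^ n i * (F (w i) y * v (G (w i) y, d - w i))) :
    LinearIndependent ℂ M := by
  classical
  have := hY.to_subtype
  refine linearIndependent_iff'.mpr fun s g hg i₀ hi₀ ↦ ?_
  have poly_eq_zero (y : Y) (hy : F (w i₀) y ≠ 0) :
      ∑ i ∈ s with w i = w i₀, g i * c i (w i₀) * (y : ℂ) ^ n i = 0 := by
    let δ : ℓ²(Y × D, ℂ) := lp.single 2 (G (w i₀) y, 0) 1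
    have entry (i) : (M i δ : Y × D → ℂ) (y, w i₀) =
        if w i = w i₀ then c i (w i₀) * (y : ℂ) ^ n i * F (w i₀) y else 0 := by
      rw [hM]
      split_ifs with hi
      · simp [δ, hi]
      · simp [δ, lp.single_apply, sub_eq_zero, Ne.symm hi]
    have total : ∑ i ∈ s, g i * (M i δ : Y × D → ℂ) (y, w i₀) = 0 := by
      simpa using congrArg (fun X ↦ lp.evalₗ (𝕜 := ℂ) _ 2 (y, w i₀) (X δ)) hg
    refine (mul_eq_zero.mp ?_).resolve_right hy
    simpa only [entry, mul_ite, mul_zero, ← Finset.sum_filter, Finset.sum_mul, mul_assoc]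
      using total
  have hinj : Set.InjOn n (s.filter (w · = w i₀) : Finset ι) := fun i hi j hj hij ↦
    hnw (Prod.ext hij ((Finset.mem_filter.mp hi).2.trans (Finset.mem_filter.mp hj).2.symm))
  have h₀ := sum_mul_pow_eq_zero hinj ((hF (w i₀)).mono poly_eq_zero).frequently i₀
    (Finset.mem_filter.mpr ⟨hi₀, rfl⟩)
  exact (mul_eq_zero.mp h₀).resolve_right (hc _ _)

end SpectralShift

/-! ### The faithful representation -/

/-- The sets on which the shift `y ↦ -q⁻¹ y` can serve as `a`, and multiplication by `y` as `b`:
they may only be left where the weight `√(1 - y²)` of `a`, respectively `√(1 - (q y)²)` of `a*`,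
vanishes. -/
structure IsAdmissibleSpectrum (q : ℝ) (Y : Set ℝ) : Prop where
  ne_zero : q ≠ 0
  sq_le_one : ∀ y ∈ Y, y ^ 2 ≤ 1
  neg_inv_mul_mem : ∀ y ∈ Y, y ^ 2 ≠ 1 → -q⁻¹ * y ∈ Y
  neg_mul_mem : ∀ y ∈ Y, (q * y) ^ 2 ≠ 1 → -q * y ∈ Y

theorem infinite_range_pow_add {r : ℝ} (hr : r ≠ 0) (hr1 : |r| < 1) (m : ℕ) :
    (Set.range fun k : ℕ ↦ r ^ (k + m)).Infinite := by
  refine Set.infinite_range_of_injective (Function.Injective.comp (g := (r ^ ·))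
    (.of_comp (f := abs) ?_) (add_left_injective m))
  simpa [Function.comp_def] using pow_right_injective₀ (abs_pos.mpr hr) hr1.ne

theorem exists_isAdmissibleSpectrum {q : ℝ} (hq : q ≠ 0) :
    ∃ Y : Set ℝ, Y.Infinite ∧ IsAdmissibleSpectrum q Y := by
  have pow_sq_le_one {r : ℝ} (hr : |r| < 1) (k : ℕ) : (r ^ k) ^ 2 ≤ 1 := by
    rw [sq_le_one_iff_abs_le_one, abs_pow]
    exact pow_le_one₀ (abs_nonneg r) hr.le
  have pow_eq_mul_pow_succ {r s : ℝ} (h : s * r = 1) (k : ℕ) : r ^ k = s * r ^ (k + 1) := by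
    rw [pow_succ', ← mul_assoc, h, one_mul]
  rcases lt_trichotomy |q| 1 with hq1 | hq1 | hq1
  · refine ⟨Set.range fun k : ℕ ↦ (-q) ^ k,
      infinite_range_pow_add (by simpa) (by simpa) 0, hq, ?_, ?_, ?_⟩
    · rintro _ ⟨k, rfl⟩
      exact pow_sq_le_one (by simpa) k
    · rintro _ ⟨_ | k, rfl⟩ hk
      · simp at hk
      · exact ⟨k, pow_eq_mul_pow_succ (by simp [hq]) _⟩
    · rintro _ ⟨k, rfl⟩ -
      exact ⟨k + 1, pow_succ' _ _⟩
  · refine ⟨Set.Icc (-1) 1, Set.Icc_infinite (by norm_num), hq, ?_, ?_, ?_⟩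
    · exact fun y hy ↦ (sq_le_one_iff_abs_le_one y).mpr (abs_le.mpr hy)
    · exact fun y hy _ ↦ abs_le.mp (by simpa [abs_mul, hq1] using abs_le.mpr hy)
    · exact fun y hy _ ↦ abs_le.mp (by simpa [abs_mul, hq1] using abs_le.mpr hy)
  · have hq1' : |-q⁻¹| < 1 := by simpa [abs_inv] using inv_lt_one_of_one_lt₀ hq1
    refine ⟨Set.range fun k : ℕ ↦ (-q⁻¹) ^ (k + 1),
      infinite_range_pow_add (by simpa) hq1' 1, hq, ?_, ?_, ?_⟩
    · rintro _ ⟨k, rfl⟩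
      exact pow_sq_le_one hq1' _
    · rintro _ ⟨k, rfl⟩ -
      exact ⟨k + 1, pow_succ' _ _⟩
    · rintro _ ⟨_ | k, rfl⟩ hk
      · simp [hq] at hk
      · exact ⟨k, pow_eq_mul_pow_succ (by simp [hq]) _⟩

namespace IsAdmissibleSpectrum

variable {q : ℝ} {Y : Set ℝ}

theorem mul_sq_le_one (hY : IsAdmissibleSpectrum q Y) : ∀ y ∈ Y, (q * y) ^ 2 ≤ 1 := by
  intro y hy
  by_cases h : (q * y) ^ 2 = 1
  · exact h.le
  · simpa only [neg_mul, neg_sq] using hY.sq_le_one _ (hY.neg_mul_mem y hy h)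

theorem isShiftWeight_a (hY : IsAdmissibleSpectrum q Y) :
    IsShiftWeight Y (fun y ↦ √(1 - y ^ 2)) (-q⁻¹) where
  ne_zero := by simpa using hY.ne_zero
  abs_le_one y _ := (abs_of_nonneg (Real.sqrt_nonneg _)).trans_le
    (Real.sqrt_le_one.mpr (sub_le_self 1 (sq_nonneg _)))
  mul_mem y hy hy' := hY.neg_inv_mul_mem y hy fun h ↦ hy' (by simp [h])

theorem isShiftWeight_star_a (hY : IsAdmissibleSpectrum q Y) :
    IsShiftWeight Y (fun y ↦ √(1 - (q * y) ^ 2)) (-q) where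
  ne_zero := by simpa using hY.ne_zero
  abs_le_one y _ := (abs_of_nonneg (Real.sqrt_nonneg _)).trans_le
    (Real.sqrt_le_one.mpr (sub_le_self 1 (sq_nonneg _)))
  mul_mem y hy hy' := hY.neg_mul_mem y hy fun h ↦ hy' (by simp [h])

theorem isShiftWeight_b (hY : IsAdmissibleSpectrum q Y) : IsShiftWeight Y id 1 where
  ne_zero := one_ne_zero
  abs_le_one y hy := (sq_le_one_iff_abs_le_one y).mp (hY.sq_le_one y hy)
  mul_mem y hy _ := by simpa

/-- The image of `a = z₁₁` in the representation on `ℓ²(Y × ℤ³)`. -/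
def opA (hY : IsAdmissibleSpectrum q Y) :
    ℓ²(Y × ℤ × ℤ × ℤ, ℂ) →L[ℂ] ℓ²(Y × ℤ × ℤ × ℤ, ℂ) :=
  spectralShift hY.isShiftWeight_a (1, 0, 0)

/-- The image of `b = z₁₂` in the representation on `ℓ²(Y × ℤ³)`. -/
def opB (hY : IsAdmissibleSpectrum q Y) :
    ℓ²(Y × ℤ × ℤ × ℤ, ℂ) →L[ℂ] ℓ²(Y × ℤ × ℤ × ℤ, ℂ) :=
  spectralShift hY.isShiftWeight_b (0, 1, 0)

variable (hY : IsAdmissibleSpectrum q Y) (v : ℓ²(Y × ℤ × ℤ × ℤ, ℂ)) (y : Y) (d : ℤ × ℤ × ℤ)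

theorem neg_mul_neg_inv (hY : IsAdmissibleSpectrum q Y) : -q * -q⁻¹ = 1 := by
  rw [neg_mul_neg, mul_inv_cancel₀ hY.ne_zero]

theorem star_opA : star hY.opA = spectralShift hY.isShiftWeight_star_a (-(1, 0, 0)) :=
  star_spectralShift _ _ hY.neg_mul_neg_inv fun y ↦ by
    rw [neg_mul, mul_neg, mul_inv_cancel_left₀ hY.ne_zero, neg_sq]

theorem star_opB : star hY.opB = spectralShift hY.isShiftWeight_b (-(0, 1, 0)) :=
  star_spectralShift _ _ (one_mul 1) fun y ↦ one_mul y

theorem opA_apply : hY.opA v (y, d) = √(1 - (y : ℝ) ^ 2) * v (scale (-q⁻¹) y, d - (1, 0, 0)) :=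
  rfl

theorem opB_apply : hY.opB v (y, d) = y * v (y, d - (0, 1, 0)) := by
  rw [opB, spectralShift_apply, scale_one, id]

theorem star_opB_apply : star hY.opB v (y, d) = y * v (y, d - -(0, 1, 0)) := by
  rw [star_opB, spectralShift_apply, scale_one, id]

theorem opB_star_opB_apply : hY.opB (star hY.opB v) (y, d) = (y : ℂ) ^ 2 * v (y, d) := by
  rw [opB_apply, star_opB_apply, sub_neg_eq_add, sub_add_cancel, sq, mul_assoc]

theorem star_opB_opB_apply : star hY.opB (hY.opB v) (y, d) = (y : ℂ) ^ 2 * v (y, d) := by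
  rw [star_opB_apply, opB_apply, sub_neg_eq_add, add_sub_cancel_right, sq, mul_assoc]

theorem opA_star_opA_apply : hY.opA (star hY.opA v) (y, d) = (1 - (y : ℂ) ^ 2) * v (y, d) := by
  rw [star_opA]
  refine (spectralShift_spectralShift_neg_apply _ _ hY.neg_mul_neg_inv
    (fun y ↦ ?_) v y d).trans ?_
  · rw [neg_mul, mul_neg, mul_inv_cancel_left₀ hY.ne_zero, neg_sq]
  · rw [← Complex.ofReal_pow, Real.sq_sqrt (sub_nonneg.mpr (hY.sq_le_one y y.2))]
    push_cast
    rfl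

theorem star_opA_opA_apply :
    star hY.opA (hY.opA v) (y, d) = (1 - (q * y : ℂ) ^ 2) * v (y, d) := by
  rw [star_opA]
  refine (spectralShift_spectralShift_neg_apply (e := -(1, 0, 0)) _ hY.isShiftWeight_a
    (mul_comm (-q) _ ▸ hY.neg_mul_neg_inv) (fun y ↦ ?_) v y d).trans ?_
  · rw [neg_mul, neg_sq]
  · rw [← Complex.ofReal_pow, Real.sq_sqrt (sub_nonneg.mpr (hY.mul_sq_le_one y y.2))]
    push_cast
    rfl

variable {X : ℓ²(Y × ℤ × ℤ × ℤ, ℂ) →L[ℂ] ℓ²(Y × ℤ × ℤ × ℤ, ℂ)}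

theorem mul_opA {e : ℤ × ℤ × ℤ} (hX : ∀ v y d, X v (y, d) = y * v (y, d - e)) :
    X * hY.opA = -((q : ℂ) • (hY.opA * X)) := by
  have hq : (q : ℂ) ≠ 0 := by exact_mod_cast hY.ne_zero
  ext v ⟨y, d⟩
  change X (hY.opA v) (y, d) = -(q * hY.opA (X v) (y, d))
  rw [hX, opA_apply, opA_apply, hX, sub_right_comm]
  by_cases hy : (y : ℝ) ^ 2 = 1
  · simp [hy]
  rw [coe_scale (hY.neg_inv_mul_mem y y.2 hy)]
  push_cast
  field_simp

theorem isGenericShift_starZPow_opA (i : ℤ) :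
    IsGenericShift (starZPow hY.opA i) (i • (1, 0, 0)) := by
  have weight_ne_zero {c : ℝ} (hc : c ≠ 0) (hle : ∀ y ∈ Y, (c * y) ^ 2 ≤ 1) :
      ∀ᶠ y : Y in cofinite, √(1 - (c * y) ^ 2) ≠ 0 := by
    have hinj : Function.Injective fun y : Y ↦ c * y :=
      (mul_right_injective₀ hc).comp Subtype.val_injective
    filter_upwards [hinj.tendsto_cofinite.eventually (eventually_cofinite_ne 1),
      hinj.tendsto_cofinite.eventually (eventually_cofinite_ne (-1))] with y hy hy'
    exact Real.sqrt_ne_zero'.mpr <| sub_pos.mpr <| (hle y y.2).lt_of_ne <| by simp [hy, hy']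
  refine IsGenericShift.starZPow ?_ ?_ i
  · refine isGenericShift_spectralShift _ ?_
    simpa using weight_ne_zero one_ne_zero (by simpa using hY.sq_le_one)
  · exact hY.star_opA ▸
      isGenericShift_spectralShift _ (weight_ne_zero hY.ne_zero hY.mul_sq_le_one)

end IsAdmissibleSpectrum

/-- The sign with which `τ` commutes past elements of degree `d`: `a` and `b`, of degrees
`(1, 0, 0)` and `(0, 1, 0)`, anticommute with it. -/
def degreeSign (d : ℤ × ℤ × ℤ) : ℂ :=
  (-1) ^ (d.1 + d.2.1)

theorem degreeSign_ne_zero (d : ℤ × ℤ × ℤ) : degreeSign d ≠ 0 :=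
  zpow_ne_zero _ (by simp)

theorem degreeSign_sub_a (d : ℤ × ℤ × ℤ) : degreeSign (d - (1, 0, 0)) = -degreeSign d := by
  simp [degreeSign, sub_add_eq_add_sub, zpow_sub_one₀]

theorem degreeSign_sub_b (d : ℤ × ℤ × ℤ) : degreeSign (d - (0, 1, 0)) = -degreeSign d := by
  simp [degreeSign, ← add_sub_assoc, zpow_sub_one₀]

theorem degreeSign_sub_tau (d : ℤ × ℤ × ℤ) (l : ℤ) :
    degreeSign (d - (0, 0, l)) = degreeSign d := by
  simp [degreeSign]

theorem star_degreeSign (d : ℤ × ℤ × ℤ) : star (degreeSign d) = (degreeSign d)⁻¹ := by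
  simp [degreeSign, star_zpow₀, ← inv_zpow]

/-- The image of `τ` in the representation on `ℓ²(Y × ℤ³)`. -/
def opT (Y : Set ℝ) : unitary (ℓ²(Y × ℤ × ℤ × ℤ, ℂ) →L[ℂ] ℓ²(Y × ℤ × ℤ × ℤ, ℂ)) :=
  unitaryShift ((Equiv.refl Y).prodCongr (Equiv.subRight (0, 0, 1))) (fun i ↦ degreeSign i.2)
    fun i ↦ by simp [degreeSign]

section

variable {Y : Set ℝ} (v : ℓ²(Y × ℤ × ℤ × ℤ, ℂ)) (y : Y) (d : ℤ × ℤ × ℤ)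

theorem opT_apply : (opT Y).1 v (y, d) = degreeSign d * v (y, d - (0, 0, 1)) :=
  unitaryShift_apply ..

theorem star_opT_apply :
    star (opT Y).1 v (y, d) = (degreeSign d)⁻¹ * v (y, d - -(0, 0, 1)) := by
  refine (star_unitaryShift_apply ..).trans ?_
  change star (degreeSign (d + (0, 0, 1))) * v (y, d + (0, 0, 1)) = _
  rw [← sub_neg_eq_add, star_degreeSign]
  exact congrArg (·⁻¹ * _) (degreeSign_sub_tau d (-1))

theorem opT_zpow_apply (l : ℤ) :
    (opT Y ^ l).1 v (y, d) = degreeSign d ^ l * v (y, d - (0, 0, l)) := by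
  obtain ⟨n, rfl | rfl⟩ := l.eq_nat_or_neg
  · simpa using pow_apply_of_apply_eq (fun _ d ↦ degreeSign_sub_tau d 1) opT_apply n v y d
  · simpa [← Unitary.star_eq_inv, ← inv_pow] using
      pow_apply_of_apply_eq (fun _ d ↦ congrArg (·⁻¹) (degreeSign_sub_tau d (-1)))
        star_opT_apply n v y d

end

namespace IsAdmissibleSpectrum

variable {q : ℝ} {Y : Set ℝ} (hY : IsAdmissibleSpectrum q Y)

theorem isUTriple : IsUTriple q hY.opA hY.opB (opT Y) where
  b_mul_a := hY.mul_opA hY.opB_apply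
  star_b_mul_a := hY.mul_opA hY.star_opB_apply
  commute_star_b_b := by
    ext v ⟨y, d⟩
    exact (hY.star_opB_opB_apply v y d).trans (hY.opB_star_opB_apply v y d).symm
  a_mul_star_a := by
    ext v ⟨y, d⟩
    change hY.opA (star hY.opA v) (y, d) + hY.opB (star hY.opB v) (y, d) = v (y, d)
    rw [opA_star_opA_apply, opB_star_opB_apply]
    ring
  star_a_mul_a := by
    ext v ⟨y, d⟩
    change star hY.opA (hY.opA v) (y, d) + q ^ 2 * hY.opB (star hY.opB v) (y, d) = v (y, d)
    rw [star_opA_opA_apply, opB_star_opB_apply]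
    ring
  a_mul_t := by
    ext v ⟨y, d⟩
    change hY.opA ((opT Y).1 v) (y, d) = -(opT Y).1 (hY.opA v) (y, d)
    rw [opA_apply, opT_apply, opT_apply, opA_apply, degreeSign_sub_a, sub_right_comm]
    ring
  b_mul_t := by
    ext v ⟨y, d⟩
    change hY.opB ((opT Y).1 v) (y, d) = -(opT Y).1 (hY.opB v) (y, d)
    rw [opB_apply, opT_apply, opT_apply, opB_apply, degreeSign_sub_b, sub_right_comm]
    ring

theorem linearIndependent_orderedMonomial (hinf : Y.Infinite) :
    LinearIndependent ℂ (orderedMonomial hY.opA hY.opB (opT Y)) := by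
  choose F G hF _ hFG using hY.isGenericShift_starZPow_opA
  refine linearIndependent_of_apply_eq hinf (n := fun p ↦ p.1 + p.2.1)
    (w := fun p ↦ (p.2.2.2, (p.1 - p.2.1 : ℤ), p.2.2.1))
    (c := fun p d ↦ degreeSign (d - (0, (p.1 - p.2.1 : ℤ), 0)) ^ p.2.2.1)
    (F := fun d ↦ F d.1) (G := fun d ↦ G d.1) ?_ ?_ ?_ ?_
  · rintro ⟨j, k, l, i⟩ ⟨j', k', l', i'⟩ h
    simp only [Prod.mk.injEq] at h ⊢
    omega
  · exact fun p d ↦ zpow_ne_zero _ (degreeSign_ne_zero _)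
  · exact fun d ↦ hF d.1
  · rintro ⟨j, k, l, i⟩ v y d
    have degree_b : d - j • (0, 1, 0) - k • -(0, 1, 0) = d - (0, (j - k : ℤ), 0) := by
      simp [Prod.ext_iff, sub_sub_eq_add_sub, sub_add_eq_add_sub]
    have degree_total :
        d - (0, (j - k : ℤ), 0) - (0, 0, l) - i • (1, 0, 0) = d - (i, (j - k : ℤ), l) := by
      simp [Prod.ext_iff]
    rw [orderedMonomial, mul_apply_eq_comp, mul_apply_eq_comp, mul_apply_eq_comp,
      pow_apply_of_apply_eq (fun _ _ ↦ rfl) hY.opB_apply,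
      pow_apply_of_apply_eq (fun _ _ ↦ rfl) hY.star_opB_apply,
      opT_zpow_apply, hFG, degree_b, degree_total]
    ring

end IsAdmissibleSpectrum

/-- Let `q` be a nonzero real number.  There exists a C*-norm on `U_q(2,-2)`:
a norm `N` with `N(xy) ≤ N(x)N(y)` and `N(x*x) = N(x)²`, where the star `sZ`
is the *-structure of `U_q(2,-2)`. -/
theorem Uq22_has_Cstar_norm (q : ℝ) (hq : q ≠ 0)
    -- the *-structure of `U_q(2,-2)`
    (sZ : GLq22 ℂ (q : ℂ) → GLq22 ℂ (q : ℂ))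
    (hsZadd : ∀ x y, sZ (x + y) = sZ x + sZ y)
    (hsZsmul : ∀ (c : ℂ) x, sZ (c • x) = (starRingEnd ℂ) c • sZ x)
    (hsZinv : ∀ x, sZ (sZ x) = x)
    (hsZmul : ∀ x y, sZ (x * y) = sZ y * sZ x)
    (hsZ11 : sZ (zM ℂ (q : ℂ) 0 0) = zM ℂ (q : ℂ) 1 1 * tauE ℂ (q : ℂ))
    (hsZ12 : sZ (zM ℂ (q : ℂ) 0 1) = (q : ℂ)⁻¹ • (zM ℂ (q : ℂ) 1 0 * tauE ℂ (q : ℂ)))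
    (hsZ21 : sZ (zM ℂ (q : ℂ) 1 0) = (q : ℂ) • (tauE ℂ (q : ℂ) * zM ℂ (q : ℂ) 0 1))
    (hsZ22 : sZ (zM ℂ (q : ℂ) 1 1) = tauE ℂ (q : ℂ) * zM ℂ (q : ℂ) 0 0)
    (hsZt : sZ (tauE ℂ (q : ℂ)) =
      zM ℂ (q : ℂ) 0 0 * zM ℂ (q : ℂ) 1 1 + (q : ℂ)⁻¹ • (zM ℂ (q : ℂ) 0 1 * zM ℂ (q : ℂ) 1 0)) :
    ∃ N : GLq22 ℂ (q : ℂ) → ℝ,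
      (∀ x, 0 ≤ N x) ∧
      (∀ x, N x = 0 → x = 0) ∧
      (∀ (c : ℂ) x, N (c • x) = ‖c‖ * N x) ∧
      (∀ x y, N (x + y) ≤ N x + N y) ∧
      (∀ x y, N (x * y) ≤ N x * N y) ∧
      (∀ x, N (sZ x * x) = N x ^ 2) := by
  let _ : StarRing (GLq22 ℂ (q : ℂ)) :=
    { star := sZ, star_involutive := hsZinv, star_mul := hsZmul, star_add := hsZadd }
  have : StarModule ℂ (GLq22 ℂ (q : ℂ)) := ⟨hsZsmul⟩
  have hz := GLq22.isGLqFamily_gen ℂ (q : ℂ)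
  have hτ := hz.tau_mem_unitary hsZt
  obtain ⟨Y, hinf, hY⟩ := exists_isAdmissibleSpectrum hq
  obtain ⟨π, hπ⟩ := GLq22.exists_injective_starAlgHom hq (hz.isUTriple hq hsZ11 hsZ12 hτ)
    (IsUTriple.eq_family hq hsZ11 hsZ12 hτ) hY.isUTriple (hY.linearIndependent_orderedMonomial hinf)
  refine ⟨fun x ↦ ‖π x‖, fun x ↦ norm_nonneg _, fun x hx ↦ ?_, fun c x ↦ ?_, fun x y ↦ ?_,
    fun x y ↦ ?_, fun x ↦ ?_⟩
  · exact (map_eq_zero_iff π hπ).mp (norm_eq_zero.mp hx)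
  · simp only [map_smul, norm_smul]
  · simpa only [map_add] using norm_add_le (π x) (π y)
  · simpa only [map_mul] using norm_mul_le (π x) (π y)
  · calc
      ‖π (star x * x)‖ = ‖star (π x) * π x‖ := by rw [map_mul, map_star]
      _ = ‖π x‖ ^ 2 := by rw [CStarRing.norm_star_mul_self (x := π x), sq]

end
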